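/- Let w ≥ 4 be an integer, and set v = w−1, u = w−2, q = w−3. Then Σ_{a+b+c=w, a≥2, b≥1, c≥1} (a−1)·2^b·ζ(a,b,c) = q·ζ(u,2) − 2u·ζ(v,1) + v·ζ(2,u). -/

import Mathlib

/-- The multiple zeta value `ζ(s₁,…,s_d) = Σ_{k₁>⋯>k_d≥1} 1/(k₁^{s₁}⋯k_d^{s_d})`. -/
noncomputable def mzv {d : ℕ} (s : Fin d → ℕ) : ℝ :=
  ∑' k : {k : Fin d → ℕ // StrictAnti k ∧ ∀ i, 0 < k i},
    ∏ i, (1 : ℝ) / (k.1 i : ℝ) ^ s i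

/-! ### Algebra: finite sums -/

/-- `Σ_{b+c=s+1, b,c ≥ 1} X^b Y^c`. -/
noncomputable def hA (s : ℕ) (X Y : ℝ) : ℝ := ∑ i ∈ Finset.range s, X ^ (i + 1) * Y ^ (s - i)

lemma hA_succ (s : ℕ) (X Y : ℝ) : hA (s + 1) X Y = Y * hA s X Y + X ^ (s + 1) * Y := by
  unfold hA
  rw [Finset.sum_range_succ, Finset.mul_sum]
  congr 1
  · apply Finset.sum_congr rfl
    intro i hi
    have := Finset.mem_range.1 hi
    rw [show s + 1 - i = (s - i) + 1 by omega]
    ring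
  · simp

lemma hA_succ' (s : ℕ) (X Y : ℝ) : hA (s + 1) X Y = X * hA s X Y + X * Y ^ (s + 1) := by
  unfold hA
  rw [Finset.sum_range_succ', Finset.mul_sum]
  congr 1
  · apply Finset.sum_congr rfl
    intro i hi
    have := Finset.mem_range.1 hi
    rw [show s + 1 - (i + 1) = (s - i) by omega]
    ring
  · simp

/-- The key partial fraction identity. -/
lemma hA_two (s : ℕ) (M N D : ℝ) (h : M * (N + D) = N * D) (h0 : N + D ≠ 0) :
    hA s (2 * M) N + hA s (2 * M) D = 2 * hA s N D := by
  induction s with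
  | zero => simp [hA]
  | succ s ih =>
    apply mul_left_cancel₀ h0
    have e1 := hA_succ' s (2 * M) N
    have e2 := hA_succ' s (2 * M) D
    have e3 := hA_succ s N D
    have e4 := hA_succ' s N D
    have e5 : (N + D) * (hA (s+1) (2 * M) N + hA (s+1) (2 * M) D)
        = 2 * (M * (N + D)) * (hA s (2 * M) N + hA s (2 * M) D + N ^ (s+1) + D ^ (s+1)) := by
      rw [e1, e2]; ring
    rw [e5, ih, h]
    have e6 : (N + D) * (2 * hA (s+1) N D) = 2 * (N * hA (s+1) N D + D * hA (s+1) N D) := by ring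
    rw [e6]
    nth_rewrite 1 [e3]
    rw [e4]
    ring

noncomputable def hC (q : ℕ) (K X Y : ℝ) : ℝ :=
  ∑ i ∈ Finset.range q, ((i : ℝ) + 1) * K ^ (i + 2) * hA (q - i) X Y

noncomputable def hW (q : ℕ) (K X : ℝ) : ℝ :=
  ∑ i ∈ Finset.range q, ((i : ℝ) + 1) * K ^ (i + 2) * X ^ (q - i)

lemma hW_succ (q : ℕ) (K X : ℝ) :
    hW (q + 1) K X = X * hW q K X + ((q : ℝ) + 1) * K ^ (q + 2) * X := by
  unfold hW
  rw [Finset.sum_range_succ, Finset.mul_sum]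
  congr 1
  · apply Finset.sum_congr rfl
    intro i hi
    have := Finset.mem_range.1 hi
    rw [show q + 1 - i = (q - i) + 1 by omega]
    ring
  · simp

lemma hC_succ (q : ℕ) (K X Y : ℝ) :
    hC (q + 1) K X Y = Y * hC q K X Y + Y * hW (q + 1) K X := by
  unfold hC hW
  rw [Finset.mul_sum, Finset.mul_sum, Finset.sum_range_succ, Finset.sum_range_succ (n := q),
    ← add_assoc, ← Finset.sum_add_distrib]
  congr 1
  · apply Finset.sum_congr rfl
    intro i hi
    have := Finset.mem_range.1 hi
    rw [show q + 1 - i = (q - i) + 1 by omega, hA_succ]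
    ring
  · simp [hA]; ring

lemma hC_two (q : ℕ) (K M N D : ℝ) (h : M * (N + D) = N * D) (h0 : N + D ≠ 0) :
    hC q K (2 * M) N + hC q K (2 * M) D = 2 * hC q K N D := by
  unfold hC
  rw [← Finset.sum_add_distrib, Finset.mul_sum]
  apply Finset.sum_congr rfl
  intro i _
  rw [← mul_add, hA_two _ M N D h h0]; ring

lemma hW_eq (q : ℕ) (k n : ℝ) (hk : k ≠ 0) (hn : n ≠ 0) (hp : k - n ≠ 0) :
    hW q (1 / k) (1 / n) = ((1 / n) ^ q - (1 / k) ^ q) / (k - n) ^ 2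
      - q * (1 / k) ^ (q + 1) / (k - n) := by
  induction q with
  | zero => simp [hW]
  | succ q ih =>
    rw [hW_succ, ih]
    simp only [pow_succ]
    push_cast
    generalize (1 / n) ^ q = x
    generalize (1 / k) ^ q = y
    field_simp
    ring

noncomputable def F1 (q : ℕ) (k n d : ℝ) : ℝ :=
  q * (1 / k) ^ (q + 1) * (1 / ((k - n) * (k - d)))
    + (1 / k) ^ q * (1 / ((k - n) ^ 2 * (k - d)) + 1 / ((k - d) ^ 2 * (k - n)))

lemma hC_off (q : ℕ) (k n d : ℝ) (hk : k ≠ 0) (hn : n ≠ 0) (hd : d ≠ 0) (hp : k - n ≠ 0)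
    (hp' : k - d ≠ 0) (hnd : d - n ≠ 0) :
    hC q (1 / k) (1 / n) (1 / d) = F1 q k n d
      + (1 / n) ^ q / ((d - n) * (k - n) ^ 2) + (1 / d) ^ q / ((n - d) * (k - d) ^ 2) := by
  have hnd' : n - d ≠ 0 := by intro h; apply hnd; linarith
  have key : hC q (1 / k) (1 / n) (1 / d) =
      (hW q (1 / k) (1 / n) - hW q (1 / k) (1 / d)) / (d - n) := by
    rw [eq_div_iff hnd]
    induction q with
    | zero => simp [hC, hW]
    | succ q ih =>
      rw [hC_succ, add_mul, mul_assoc, ih]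
      have e1 := hW_succ q (1 / k) (1 / n)
      have e2 := hW_succ q (1 / k) (1 / d)
      rw [e1, e2]
      field_simp
      ring
  rw [key, hW_eq q k n hk hn hp, hW_eq q k d hk hd hp', F1]
  simp only [pow_succ]
  generalize (1 / n) ^ q = x
  generalize (1 / k) ^ q = y
  generalize (1 / d) ^ q = z
  rw [show n - d = -(d - n) by ring]
  obtain ⟨p, rfl⟩ : ∃ p, n = k - p := ⟨k - n, by ring⟩
  obtain ⟨p', rfl⟩ : ∃ p, d = k - p := ⟨k - d, by ring⟩
  simp only [sub_sub_cancel] at *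
  have : k - p' - (k - p) = p - p' := by ring
  have h3 : p - p' ≠ 0 := this ▸ hnd
  rw [this]
  field_simp
  ring

lemma hC_diag (q : ℕ) (k n : ℝ) (hk : k ≠ 0) (hn : n ≠ 0) (hp : k - n ≠ 0) :
    hC q (1 / k) (1 / n) (1 / n) = F1 q k n n
      + (q * (1 / n) ^ (q + 1) / (k - n) ^ 2 - 2 * (1 / n) ^ q / (k - n) ^ 3) := by
  induction q with
  | zero => simp [hC, F1]; field_simp; ring
  | succ q ih =>
    rw [hC_succ, ih, hW_eq _ k n hk hn hp]
    unfold F1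
    simp only [pow_succ]
    push_cast
    generalize (1 / n) ^ q = x
    generalize (1 / k) ^ q = y
    field_simp
    ring

noncomputable def F2 (q : ℕ) (k n d : ℝ) : ℝ :=
  if n = d then (1 / 2) * (q * (1 / n) ^ (q + 1) * (1 / (k - n) ^ 2)
      - 2 * (1 / n) ^ q * (1 / (k - n) ^ 3))
  else (1 / n) ^ q * (1 / (d - n)) * (1 / (k - n) ^ 2)

lemma hC_split (q : ℕ) (k n d : ℝ) (hk : k ≠ 0) (hn : n ≠ 0) (hd : d ≠ 0) (hp : k - n ≠ 0)
    (hp' : k - d ≠ 0) :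
    hC q (1 / k) (1 / n) (1 / d) = F1 q k n d + F2 q k n d + F2 q k d n := by
  by_cases h : n = d
  · subst h
    rw [hC_diag q k n hk hn hp]
    simp only [F2, if_true]
    ring
  · have h' : d - n ≠ 0 := by intro h'; apply h; linarith
    have h'' : n - d ≠ 0 := by intro h'; apply h; linarith
    rw [hC_off q k n d hk hn hd hp hp' h']
    simp only [F2, if_neg h, if_neg (Ne.symm h)]
    field_simp
/-! ### Harmonic numbers -/

noncomputable def hH (e n : ℕ) : ℝ := ∑ i ∈ Finset.range n, 1 / ((i : ℝ) + 1) ^ e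

lemma hH_succ (e n : ℕ) : hH e (n + 1) = hH e n + 1 / ((n : ℝ) + 1) ^ e := by
  simp [hH, Finset.sum_range_succ]

lemma hH_zero (e : ℕ) : hH e 0 = 0 := by simp [hH]

lemma sum_rev (M r : ℕ) (h : r ≤ M) :
    ∑ j ∈ Finset.range r, 1 / ((M : ℝ) - j) = hH 1 M - hH 1 (M - r) := by
  induction r with
  | zero => simp
  | succ r ih =>
    rw [Finset.sum_range_succ, ih (by omega)]
    obtain ⟨c, rfl⟩ : ∃ c, M = c + (r + 1) := ⟨M - (r + 1), by omega⟩
    rw [show c + (r + 1) - r = c + 1 by omega, show c + (r + 1) - (r + 1) = c by omega, hH_succ]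
    push_cast
    rw [show (c : ℝ) + (r + 1) - r = c + 1 by ring]
    ring

/-- `Σ_{p<N} 1/(p(N-p)) = 2H_{N-1}/N`. -/
lemma sum_conv (M : ℕ) :
    ∑ i ∈ Finset.range M, 1 / ((M : ℝ) - i) * (1 / ((i : ℝ) + 1)) = 2 * hH 1 M / (M + 1) := by
  have h1 := sum_rev M M le_rfl
  rw [Nat.sub_self, hH_zero, sub_zero] at h1
  have h2 : ∑ i ∈ Finset.range M, 1 / ((M : ℝ) - i) * (1 / ((i : ℝ) + 1))
      = ∑ i ∈ Finset.range M, (1 / ((M : ℝ) - i) + 1 / ((i : ℝ) + 1) ^ 1) / (M + 1) := by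
    apply Finset.sum_congr rfl
    intro i hi
    have : (i : ℝ) < M := by exact_mod_cast Finset.mem_range.1 hi
    have a1 : (M : ℝ) - i ≠ 0 := by linarith
    have a2 : (i : ℝ) + 1 ≠ 0 := by positivity
    have a3 : (M : ℝ) + 1 ≠ 0 := by positivity
    field_simp
    ring
  rw [h2, ← Finset.sum_div, Finset.sum_add_distrib, h1]
  simp only [hH]
  ring

noncomputable def alpha (M : ℕ) : ℝ :=
  ∑ i ∈ Finset.range M, 1 / ((M : ℝ) - i) * (hH 1 M - hH 1 (i + 1))

lemma alpha_aux (M : ℕ) :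
    ∑ i ∈ Finset.range M, 1 / ((M : ℝ) - i) * (hH 1 M - hH 1 i) = hH 2 M := by
  have hrefl : ∀ M : ℕ, ∑ i ∈ Finset.range M, 1 / ((M : ℝ) - i) * (hH 1 M - hH 1 i)
      = ∑ i ∈ Finset.range M, 1 / ((i : ℝ) + 1) * (hH 1 M - hH 1 (M - 1 - i)) := by
    intro M
    rw [← Finset.sum_range_reflect]
    apply Finset.sum_congr rfl
    intro i hi
    have := Finset.mem_range.1 hi
    congr 2
    rw [Nat.sub_sub, Nat.cast_sub (by omega)]; push_cast; ring
  rw [hrefl]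
  induction M with
  | zero => simp [hH]
  | succ M ih =>
    rw [Finset.sum_range_succ, hH_succ 2, ← ih]
    have e : ∀ i ∈ Finset.range M, 1 / ((i : ℝ) + 1) * (hH 1 (M+1) - hH 1 (M + 1 - 1 - i))
      = 1 / ((i : ℝ) + 1) * (hH 1 M - hH 1 (M - 1 - i))
        + (1 / ((i : ℝ) + 1) ^ 1 * (1 / ((M : ℝ) + 1)) - 1 / ((M : ℝ) - i) * (1 / ((i : ℝ) + 1))) := by
      intro i hi
      have := Finset.mem_range.1 hi
      rw [show M + 1 - 1 - i = (M - 1 - i) + 1 by omega, hH_succ, hH_succ]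
      have : (((M - 1 - i : ℕ) : ℝ) + 1) = M - i := by
        rw [Nat.sub_sub, Nat.cast_sub (by omega)]; push_cast; ring
      rw [this]; ring
    rw [Finset.sum_congr rfl e, Finset.sum_add_distrib, Finset.sum_sub_distrib, sum_conv,
      ← Finset.sum_mul]
    change _ + (hH 1 M * _ - _) + _ = _
    rw [show M + 1 - 1 - M = 0 by omega, hH_zero, hH_succ]
    field_simp
    ring

lemma alpha_eq (M : ℕ) : alpha M = hH 2 M - 2 * hH 1 M / (M + 1) := by
  rw [← alpha_aux, ← sum_conv, alpha, ← Finset.sum_sub_distrib]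
  apply Finset.sum_congr rfl
  intro i _
  rw [hH_succ]; ring

noncomputable def Qs (M : ℕ) : ℝ :=
  ∑ i ∈ Finset.range M, 1 / ((M : ℝ) - i) ^ 2 * (hH 1 M - hH 1 (i + 1))

lemma H12 (M : ℕ) : ∑ j ∈ Finset.range M, (hH 2 (j + 1) / ((j : ℝ) + 1) + hH 1 j / ((j : ℝ) + 1) ^ 2)
    = hH 1 M * hH 2 M := by
  induction M with
  | zero => simp [hH]
  | succ M ih =>
    rw [Finset.sum_range_succ, ih]
    simp only [hH_succ]
    field_simp
    ring

lemma conv2 (M : ℕ) : ∑ j ∈ Finset.range M, hH 2 (j + 1) / ((M : ℝ) - j)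
    = ∑ i ∈ Finset.range M, 1 / ((M : ℝ) - i) ^ 2 * hH 1 (i + 1) := by
  have hrefl : ∑ i ∈ Finset.range M, 1 / ((M : ℝ) - i) ^ 2 * hH 1 (i + 1)
      = ∑ i ∈ Finset.range M, 1 / ((i : ℝ) + 1) ^ 2 * hH 1 (M - i) := by
    rw [← Finset.sum_range_reflect]
    apply Finset.sum_congr rfl
    intro i hi
    have := Finset.mem_range.1 hi
    congr 2
    · rw [Nat.sub_sub, Nat.cast_sub (by omega)]; push_cast; ring
    · omega
  rw [hrefl]
  have e1 : ∀ i ∈ Finset.range M, 1 / ((i : ℝ) + 1) ^ 2 * hH 1 (M - i)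
      = ∑ j ∈ Finset.Ico i M, 1 / ((i : ℝ) + 1) ^ 2 * (1 / ((M : ℝ) - j)) := by
    intro i hi
    have := Finset.mem_range.1 hi
    rw [← Finset.mul_sum, Finset.sum_Ico_eq_sub _ this.le, sum_rev M M le_rfl, sum_rev M i this.le,
      Nat.sub_self, hH_zero]
    ring
  rw [Finset.sum_congr rfl e1]
  have e2 : ∀ j ∈ Finset.range M, hH 2 (j + 1) / ((M : ℝ) - j)
      = ∑ i ∈ Finset.range (j + 1), 1 / ((i : ℝ) + 1) ^ 2 * (1 / ((M : ℝ) - j)) := by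
    intro j _
    rw [← Finset.sum_mul, hH]; ring
  rw [Finset.sum_congr rfl e2]
  apply Finset.sum_comm'
  intro x y
  simp only [Finset.mem_range, Finset.mem_Ico]
  omega

lemma Qs_eq (M : ℕ) : Qs M = ∑ j ∈ Finset.range M,
    (hH 2 (j + 1) / ((j : ℝ) + 1) + hH 1 j / ((j : ℝ) + 1) ^ 2 - hH 2 (j + 1) / ((M : ℝ) - j)) := by
  rw [Finset.sum_sub_distrib, H12, conv2, Qs]
  have : hH 1 M * hH 2 M = ∑ i ∈ Finset.range M, 1 / ((M : ℝ) - i) ^ 2 * hH 1 M := by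
    rw [← Finset.sum_mul, mul_comm]
    congr 1
    rw [← Finset.sum_range_reflect, hH]
    apply Finset.sum_congr rfl
    intro i hi
    have := Finset.mem_range.1 hi
    congr 2
    rw [Nat.sub_sub, Nat.cast_sub (by omega)]; push_cast; ring
  rw [this, ← Finset.sum_sub_distrib]
  apply Finset.sum_congr rfl
  intro i _
  ring
/-! ### Summability -/

noncomputable def rr (n : ℕ) : ℝ := Real.sqrt (Real.sqrt ((n : ℝ) + 1))

lemma rr_pow (n : ℕ) : rr n ^ 4 = (n : ℝ) + 1 := by
  unfold rr
  rw [show 4 = 2 * 2 by norm_num, pow_mul, Real.sq_sqrt (Real.sqrt_nonneg _),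
    Real.sq_sqrt (by positivity)]

lemma rr_pos (n : ℕ) : 0 < rr n := by unfold rr; positivity

lemma rr_one (n : ℕ) : 1 ≤ rr n := by
  unfold rr
  rw [Real.one_le_sqrt, Real.one_le_sqrt]
  linarith [(Nat.cast_nonneg n : (0:ℝ) ≤ n)]

lemma rr_mono {m n : ℕ} (h : m ≤ n) : rr m ≤ rr n := by
  unfold rr
  have : (m : ℝ) ≤ n := by exact_mod_cast h
  gcongr

lemma rr_summable : Summable (fun n : ℕ => 1 / rr n ^ 5) := by
  have h : Summable (fun n : ℕ => 1 / (n : ℝ) ^ (5 / 4 : ℝ)) :=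
    Real.summable_one_div_nat_rpow.2 (by norm_num)
  have h2 := (summable_nat_add_iff 1).2 h
  refine h2.congr ?_
  intro n
  congr 1
  have : (((n + 1 : ℕ) : ℝ)) = rr n ^ 4 := by rw [rr_pow]; push_cast; ring
  rw [this, ← Real.rpow_natCast, ← Real.rpow_natCast, ← Real.rpow_mul (rr_pos n).le]
  norm_num

lemma rr_summable2 : Summable (fun p : ℕ × ℕ => 1 / rr p.1 ^ 5 * (1 / rr p.2 ^ 5)) :=
  rr_summable.mul_of_nonneg rr_summable (fun n => by have := rr_pos n; positivity)
    (fun n => by have := rr_pos n; positivity)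

lemma rr_summable3 :
    Summable (fun p : ℕ × ℕ × ℕ => 1 / rr p.1 ^ 5 * (1 / rr p.2.1 ^ 5 * (1 / rr p.2.2 ^ 5))) :=
  rr_summable.mul_of_nonneg rr_summable2 (fun n => by have := rr_pos n; positivity)
    (fun n => by have := rr_pos n.1; have := rr_pos n.2; positivity)

lemma bound2 (i j : ℕ) :
    1 / ((i : ℝ) + j + 2) ^ 2 * (1 / ((i : ℝ) + 1)) ≤ 1 / rr i ^ 5 * (1 / rr j ^ 5) := by
  have hi := rr_pos i
  have hj := rr_pos j
  have h1 := rr_mono (show i ≤ i + j + 1 by omega)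
  have h2 := rr_mono (show j ≤ i + j + 1 by omega)
  have e : (i : ℝ) + j + 2 = rr (i + j + 1) ^ 4 := by rw [rr_pow]; push_cast; ring
  have h5 := rr_one (i + j + 1)
  have h6 := rr_pos (i + j + 1)
  rw [e, ← rr_pow i, one_div_mul_one_div, one_div_mul_one_div]
  apply one_div_le_one_div_of_le (by positivity)
  calc rr i ^ 5 * rr j ^ 5 = (rr i * 1 ^ 2 * rr j ^ 5) * rr i ^ 4 := by ring
    _ ≤ (rr (i+j+1) * (rr (i+j+1)) ^ 2 * rr (i+j+1) ^ 5) * rr i ^ 4 := by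
        gcongr
    _ = _ := by ring

lemma bound3 (i j l : ℕ) :
    1 / ((i : ℝ) + j + l + 3) ^ 2 * (1 / ((i : ℝ) + j + 2)) * (1 / ((i : ℝ) + 1))
      ≤ 1 / rr i ^ 5 * (1 / rr j ^ 5 * (1 / rr l ^ 5)) := by
  have hi := rr_pos i
  have hj := rr_pos j
  have hl := rr_pos l
  have h0 := rr_mono (show i ≤ i + j + 1 by omega)
  have h1 := rr_mono (show j ≤ i + j + 1 by omega)
  have h2 := rr_mono (show l ≤ i + j + l + 2 by omega)
  have h3 := rr_mono (show j ≤ i + j + l + 2 by omega)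
  have hh := rr_pos (i + j + 1)
  have e : (i : ℝ) + j + 2 = rr (i + j + 1) ^ 4 := by rw [rr_pow]; push_cast; ring
  have e' : (i : ℝ) + j + l + 3 = rr (i + j + l + 2) ^ 4 := by rw [rr_pow]; push_cast; ring
  have h5 := rr_one (i + j + 1)
  have h6 := rr_pos (i + j + l + 2)
  rw [e, e', ← rr_pow i]
  simp only [one_div_mul_one_div]
  apply one_div_le_one_div_of_le (by positivity)
  calc rr i ^ 5 * (rr j ^ 5 * rr l ^ 5)
      = (rr l ^ 5 * rr j ^ 3) * (rr j ^ 2 * rr i * 1) * rr i ^ 4 := by ring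
    _ ≤ (rr (i+j+l+2) ^ 5 * rr (i+j+l+2) ^ 3)
        * (rr (i+j+1) ^ 2 * rr (i+j+1) * rr (i+j+1)) * rr i ^ 4 := by
        gcongr
    _ = _ := by ring

lemma boundoff (i j l : ℕ) (d : ℕ) (hd : i = j + d + 1 ∨ j = i + d + 1) :
    1 / ((i : ℝ) + 1) * (1 / ((d : ℝ) + 1)) * (1 / ((j : ℝ) + l + 2) ^ 2)
      ≤ 1 / rr (min i j) ^ 5 * (1 / rr d ^ 5 * (1 / rr l ^ 5)) := by
  have hi := rr_pos i
  have hj := rr_pos j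
  have hl := rr_pos l
  have hd' := rr_pos d
  have h0 := rr_mono (show j ≤ j + l + 1 by omega)
  have h1 := rr_mono (show l ≤ j + l + 1 by omega)
  have e : (j : ℝ) + l + 2 = rr (j + l + 1) ^ 4 := by rw [rr_pow]; push_cast; ring
  rw [e, ← rr_pow i, ← rr_pow d]
  simp only [one_div_mul_one_div]
  have hm := rr_pos (min i j)
  apply one_div_le_one_div_of_le (by positivity)
  have hhi := rr_mono (show min i j ≤ i by omega)
  have hhj := rr_mono (show min i j ≤ j by omega)
  have key : rr (min i j) * rr d ≤ rr i ^ 0 * rr j ^ 2 ∨ rr d * rr (min i j) ≤ rr i * rr j := by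
    rcases hd with hd | hd
    · right
      have := rr_mono (show d ≤ i by omega)
      gcongr
    · left
      have := rr_mono (show d ≤ j by omega)
      calc rr (min i j) * rr d ≤ rr j * rr j := by gcongr
        _ = _ := by ring
  have h5 := rr_one (j + l + 1)
  have hjl := rr_pos (j + l + 1)
  rcases key with key | key
  · calc rr (min i j) ^ 5 * (rr d ^ 5 * rr l ^ 5)
        = rr (min i j) ^ 4 * rr d ^ 4 * ((rr (min i j) * rr d) * 1 * rr l ^ 5) := by ring
      _ ≤ rr i ^ 4 * rr d ^ 4 * ((rr i ^ 0 * rr j ^ 2) * rr (j + l + 1) * rr (j + l + 1) ^ 5) := by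
          gcongr
      _ ≤ rr i ^ 4 * rr d ^ 4 * ((rr i ^ 0 * rr (j+l+1) ^ 2) * rr (j + l + 1) * rr (j + l + 1) ^ 5) := by
          gcongr
      _ = _ := by ring
  · calc rr (min i j) ^ 5 * (rr d ^ 5 * rr l ^ 5)
        = rr d ^ 4 * rr (min i j) ^ 3 * (rr (min i j) * (rr d * rr (min i j)) * 1 * rr l ^ 5) := by ring
      _ ≤ rr d ^ 4 * rr i ^ 3 * (rr j * (rr i * rr j) * rr (j + l + 1) * rr (j + l + 1) ^ 5) := by
          gcongr
      _ ≤ rr d ^ 4 * rr i ^ 3 * (rr (j+l+1) * (rr i * rr (j+l+1)) * rr (j + l + 1) * rr (j + l + 1) ^ 5) := by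
          gcongr
      _ = _ := by ring

/-! ### Double-sum rearrangement -/

lemma anti2 (A B : ℕ → ℝ) (S : ℝ)
    (h : HasSum (fun p : ℕ × ℕ => A (p.1 + p.2 + 1) * B p.1) S) :
    HasSum (fun M => A M * ∑ i ∈ Finset.range M, B i) S := by
  have inj : Function.Injective (fun p : ℕ × ℕ => (p.1 + p.2 + 1, p.1)) := by
    rintro ⟨a, b⟩ ⟨c, d⟩ h
    simp only [Prod.mk.injEq] at h ⊢
    omega
  have h2 : HasSum (fun x : ℕ × ℕ => if x.2 < x.1 then A x.1 * B x.2 else 0) S := by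
    rw [← inj.hasSum_iff]
    · convert h using 2 with p
      simp only [Function.comp]
      rw [if_pos (by omega)]
    · rintro ⟨a, b⟩ hx
      simp only
      rw [if_neg]
      intro hlt
      apply hx
      exact ⟨(b, a - b - 1), by simp; omega⟩
  refine h2.prod_fiberwise (fun M => ?_)
  simp only
  rw [Finset.mul_sum]
  have := hasSum_sum_of_ne_finset_zero (f := fun c => if c < M then A M * B c else 0)
    (s := Finset.range M) (L := SummationFilter.unconditional ℕ) (by
      intro b hb
      rw [if_neg]
      simpa using hb)
  convert this using 1
  apply Finset.sum_congr rfl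
  intro i hi
  rw [if_pos (Finset.mem_range.1 hi)]

lemma anti3 (G : ℕ → ℕ → ℕ → ℝ) (S : ℝ)
    (h : HasSum (fun p : ℕ × ℕ × ℕ => G (p.1 + p.2.1 + p.2.2 + 2) p.1 p.2.1) S) :
    HasSum (fun M => ∑ i ∈ Finset.range M, ∑ j ∈ Finset.range (M - 1 - i), G M i j) S := by
  have inj : Function.Injective
      (fun p : ℕ × ℕ × ℕ => (p.1 + p.2.1 + p.2.2 + 2, (p.1, p.2.1))) := by
    rintro ⟨a, b, b'⟩ ⟨c, d, d'⟩ h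
    simp only [Prod.mk.injEq] at h ⊢
    omega
  have h2 : HasSum (fun x : ℕ × ℕ × ℕ =>
      if x.2.1 + x.2.2 + 1 < x.1 then G x.1 x.2.1 x.2.2 else 0) S := by
    rw [← inj.hasSum_iff]
    · convert h using 2 with p
      simp only [Function.comp]
      rw [if_pos (by omega)]
    · rintro ⟨a, b, c⟩ hx
      simp only
      rw [if_neg]
      intro hlt
      apply hx
      exact ⟨(b, c, a - b - c - 2), by simp; omega⟩
  refine h2.prod_fiberwise (fun M => ?_)
  simp only
  have := hasSum_sum_of_ne_finset_zero (f := fun c : ℕ × ℕ => if c.1 + c.2 + 1 < M then G M c.1 c.2 else 0)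
    (s := Finset.range M ×ˢ Finset.range M) (L := SummationFilter.unconditional (ℕ × ℕ)) (by
      rintro ⟨b, c⟩ hb
      rw [if_neg]
      simp only [Finset.mem_product, Finset.mem_range] at hb
      simp only
      omega)
  convert this using 1
  rw [Finset.sum_product]
  apply Finset.sum_congr rfl
  intro i hi
  simp only
  rw [← Finset.sum_filter]
  apply Finset.sum_congr _ (fun _ _ => rfl)
  ext j
  simp only [Finset.mem_range, Finset.mem_filter] at hi ⊢
  omega
lemma hs_conv {ι : Type} {f g : ι → ℝ} {a b : ℝ} (h : HasSum f a) (hf : ∀ x, g x = f x)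
    (hb : b = a) : HasSum g b := by
  have : g = f := funext hf
  rw [this, hb]; exact h

/-! ### Multiple zeta values as sums over natural numbers -/

lemma strictAnti_pair (x y : ℕ) : StrictAnti ![x, y] ↔ y < x := by
  constructor
  · intro h
    exact h (show (0 : Fin 2) < 1 by decide)
  · intro h i j hij
    fin_cases i <;> fin_cases j <;> simp_all

lemma strictAnti_triple (x y z : ℕ) : StrictAnti ![x, y, z] ↔ z < y ∧ y < x := by
  constructor
  · intro h
    exact ⟨h (show (1 : Fin 3) < 2 by decide), h (show (0 : Fin 3) < 1 by decide)⟩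
  · rintro ⟨h1, h2⟩ i j hij
    fin_cases i <;> fin_cases j <;> simp_all
    omega

def eq2 : ℕ × ℕ ≃ {k : Fin 2 → ℕ // StrictAnti k ∧ ∀ i, 0 < k i} where
  toFun p := ⟨![p.1 + p.2 + 2, p.1 + 1], by
    rw [strictAnti_pair]
    refine ⟨by omega, fun i => ?_⟩
    fin_cases i <;> simp⟩
  invFun k := (k.1 1 - 1, k.1 0 - k.1 1 - 1)
  left_inv := by
    rintro ⟨a, b⟩
    simp
    omega
  right_inv := by
    rintro ⟨k, hk, hp⟩
    have h1 : k 1 < k 0 := hk (show (0 : Fin 2) < 1 by decide)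
    have h2 := hp 1
    ext i
    fin_cases i <;> simp <;> omega

def eq3 : ℕ × ℕ × ℕ ≃ {k : Fin 3 → ℕ // StrictAnti k ∧ ∀ i, 0 < k i} where
  toFun p := ⟨![p.1 + p.2.1 + p.2.2 + 3, p.1 + p.2.1 + 2, p.1 + 1], by
    rw [strictAnti_triple]
    refine ⟨by omega, fun i => ?_⟩
    fin_cases i <;> simp⟩
  invFun k := (k.1 2 - 1, k.1 1 - k.1 2 - 1, k.1 0 - k.1 1 - 1)
  left_inv := by
    rintro ⟨a, b, c⟩
    simp
    omega
  right_inv := by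
    rintro ⟨k, hk, hp⟩
    have h1 : k 1 < k 0 := hk (show (0 : Fin 3) < 1 by decide)
    have h3 : k 2 < k 1 := hk (show (1 : Fin 3) < 2 by decide)
    have h2 := hp 2
    ext i
    fin_cases i <;> simp <;> omega

lemma inv_pow_le (x : ℝ) (hx : 1 ≤ x) (a b : ℕ) (h : b ≤ a) : 1 / x ^ a ≤ 1 / x ^ b := by
  apply one_div_le_one_div_of_le (by positivity)
  exact pow_le_pow_right₀ hx h

lemma mzv2 (a b : ℕ) (ha : 2 ≤ a) (hb : 1 ≤ b) :
    HasSum (fun p : ℕ × ℕ => 1 / ((p.1 : ℝ) + p.2 + 2) ^ a * (1 / ((p.1 : ℝ) + 1) ^ b))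
      (mzv ![a, b]) := by
  have hs : Summable
      (fun p : ℕ × ℕ => 1 / ((p.1 : ℝ) + p.2 + 2) ^ a * (1 / ((p.1 : ℝ) + 1) ^ b)) := by
    refine Summable.of_nonneg_of_le (fun p => by positivity) (fun p => ?_) rr_summable2
    refine le_trans ?_ (bound2 p.1 p.2)
    have h0 : (0 : ℝ) ≤ p.1 := Nat.cast_nonneg _
    have h1 : (0 : ℝ) ≤ p.2 := Nat.cast_nonneg _
    apply mul_le_mul
    · exact inv_pow_le _ (by linarith) _ _ ha
    · have := inv_pow_le ((p.1 : ℝ) + 1) (by linarith) _ _ hb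
      simpa using this
    · positivity
    · positivity
  have : mzv ![a, b] = ∑' p : ℕ × ℕ,
      1 / ((p.1 : ℝ) + p.2 + 2) ^ a * (1 / ((p.1 : ℝ) + 1) ^ b) := by
    unfold mzv
    rw [← eq2.tsum_eq]
    apply tsum_congr
    intro p
    simp [eq2, Fin.prod_univ_two]
    ring
  rw [this]
  exact hs.hasSum

lemma mzv3 (a b c : ℕ) (ha : 2 ≤ a) (hb : 1 ≤ b) (hc : 1 ≤ c) :
    HasSum (fun p : ℕ × ℕ × ℕ => 1 / ((p.1 : ℝ) + p.2.1 + p.2.2 + 3) ^ a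
      * (1 / ((p.1 : ℝ) + p.2.1 + 2) ^ b) * (1 / ((p.1 : ℝ) + 1) ^ c))
      (mzv ![a, b, c]) := by
  have hs : Summable
      (fun p : ℕ × ℕ × ℕ => 1 / ((p.1 : ℝ) + p.2.1 + p.2.2 + 3) ^ a
      * (1 / ((p.1 : ℝ) + p.2.1 + 2) ^ b) * (1 / ((p.1 : ℝ) + 1) ^ c)) := by
    refine Summable.of_nonneg_of_le (fun p => by positivity) (fun p => ?_) rr_summable3
    refine le_trans ?_ (bound3 p.1 p.2.1 p.2.2)
    have h0 : (0 : ℝ) ≤ p.1 := Nat.cast_nonneg _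
    have h1 : (0 : ℝ) ≤ p.2.1 := Nat.cast_nonneg _
    have h2 : (0 : ℝ) ≤ p.2.2 := Nat.cast_nonneg _
    apply mul_le_mul
    · apply mul_le_mul
      · exact inv_pow_le _ (by linarith) _ _ ha
      · have := inv_pow_le ((p.1 : ℝ) + p.2.1 + 2) (by linarith) _ _ hb
        simpa using this
      · positivity
      · positivity
    · have := inv_pow_le ((p.1 : ℝ) + 1) (by linarith) _ _ hc
      simpa using this
    · positivity
    · positivity
  have : mzv ![a, b, c] = ∑' p : ℕ × ℕ × ℕ, 1 / ((p.1 : ℝ) + p.2.1 + p.2.2 + 3) ^ a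
      * (1 / ((p.1 : ℝ) + p.2.1 + 2) ^ b) * (1 / ((p.1 : ℝ) + 1) ^ c) := by
    unfold mzv
    rw [← eq3.tsum_eq]
    apply tsum_congr
    intro p
    simp [eq3, Fin.prod_univ_three]
    ring
  rw [this]
  exact hs.hasSum

/-- depth two MZV, summed over the larger index -/
lemma mzv2_big (a b : ℕ) (ha : 2 ≤ a) (hb : 1 ≤ b) :
    HasSum (fun M : ℕ => 1 / ((M : ℝ) + 1) ^ a * hH b M) (mzv ![a, b]) := by
  have := anti2 (fun M => 1 / ((M : ℝ) + 1) ^ a) (fun i => 1 / ((i : ℝ) + 1) ^ b) (mzv ![a, b]) (by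
    refine hs_conv (mzv2 a b ha hb) (fun p => ?_) rfl
    push_cast; ring)
  exact this

/-! ### Tails -/

/-- `Σ_{j>n} 1/j^e`. -/
noncomputable def tl (e n : ℕ) : ℝ := (∑' i : ℕ, 1 / ((i : ℝ) + 1) ^ e) - hH e n

lemma zsum (e : ℕ) (he : 2 ≤ e) : Summable (fun i : ℕ => 1 / ((i : ℝ) + 1) ^ e) := by
  have h := (summable_nat_add_iff 1).2 (Real.summable_one_div_nat_pow.2 (show 1 < e by omega))
  refine h.congr (fun i => ?_)
  push_cast; rfl

lemma tl_hasSum (e n : ℕ) (he : 2 ≤ e) :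
    HasSum (fun l : ℕ => 1 / ((n : ℝ) + l + 1) ^ e) (tl e n) := by
  have h := (hasSum_nat_add_iff' (f := fun i : ℕ => 1 / ((i : ℝ) + 1) ^ e) n).2 (zsum e he).hasSum
  refine hs_conv h (fun l => ?_) rfl
  push_cast; ring

lemma tl_succ (e n : ℕ) : tl e (n + 1) = tl e n - 1 / ((n : ℝ) + 1) ^ e := by
  unfold tl; rw [hH_succ]; ring

lemma tl_nonneg (e n : ℕ) (he : 2 ≤ e) : 0 ≤ tl e n :=
  (tl_hasSum e n he).nonneg (fun l => by positivity)

/-- depth two MZV, summed over the smaller index -/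
lemma mzv2_small (b : ℕ) (hb : 1 ≤ b) :
    HasSum (fun M : ℕ => tl 2 (M + 1) * (1 / ((M : ℝ) + 1) ^ b)) (mzv ![2, b]) := by
  refine (mzv2 2 b le_rfl hb).prod_fiberwise (fun M => ?_)
  simp only
  apply HasSum.mul_right
  refine hs_conv (tl_hasSum 2 (M + 1) le_rfl) (fun l => ?_) rfl
  push_cast; ring

lemma harm_hasSum (N : ℕ) :
    HasSum (fun l : ℕ => 1 / ((l : ℝ) + 1) - 1 / ((l : ℝ) + N + 1)) (hH 1 N) := by
  induction N with
  | zero =>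
    rw [hH_zero]
    convert hasSum_zero with l
    simp
  | succ N ih =>
    rw [hH_succ]
    have h : HasSum (fun l : ℕ => 1 / ((l : ℝ) + N + 1) - 1 / ((l : ℝ) + (N + 1 : ℕ) + 1))
        (1 / ((N : ℝ) + 1) ^ 1) := by
      have ht : Filter.Tendsto (fun l : ℕ => 1 / ((l : ℝ) + N + 1)) Filter.atTop (nhds 0) := by
        have := tendsto_one_div_add_atTop_nhds_zero_nat (𝕜 := ℝ)
        have h2 := (Filter.tendsto_add_atTop_iff_nat N).2 this
        refine h2.congr (fun l => ?_)
        push_cast; rfl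
      rw [hasSum_iff_tendsto_nat_of_nonneg]
      · have e : ∀ n : ℕ, ∑ l ∈ Finset.range n,
            (1 / ((l : ℝ) + N + 1) - 1 / ((l : ℝ) + (N + 1 : ℕ) + 1))
            = 1 / ((N : ℝ) + 1) - 1 / ((n : ℝ) + N + 1) := by
          intro n
          have := Finset.sum_range_sub' (fun l : ℕ => 1 / ((l : ℝ) + N + 1)) n
          simp only [Nat.cast_zero, zero_add] at this
          rw [← this]
          apply Finset.sum_congr rfl
          intro l _
          push_cast; ring
        simp only [e]
        simpa using ht.const_sub (1 / ((N : ℝ) + 1))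
      · intro l
        rw [sub_nonneg]
        apply one_div_le_one_div_of_le (by positivity)
        push_cast; linarith
    refine hs_conv (ih.add h) (fun l => ?_) rfl
    ring

/-- `Σ_n 1/(n(n+N)) = H_N/N`. -/
lemma harm_hasSum' (N : ℕ) :
    HasSum (fun l : ℕ => 1 / ((l : ℝ) + 1) * (1 / ((l : ℝ) + N + 2))) (hH 1 (N + 1) / (N + 1)) := by
  refine hs_conv ((harm_hasSum (N + 1)).div_const ((N : ℝ) + 1)) (fun l => ?_) rfl
  push_cast
  field_simp
  ring

/-- Euler: `ζ(2,1) = ζ(3)`. -/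
lemma euler : mzv ![2, 1] = tl 3 0 := by
  have h1 := mzv2 2 1 le_rfl le_rfl
  have h1' := (Equiv.prodComm ℕ ℕ).hasSum_iff.2 h1
  have h2 := h1.add h1'
  have h3 : HasSum (fun M : ℕ => hH 1 (M + 1) / ((M : ℝ) + 1) ^ 2) (mzv ![2, 1] + mzv ![2, 1]) := by
    refine h2.prod_fiberwise (fun M => ?_)
    have h := (harm_hasSum' M).mul_left (1 / ((M : ℝ) + 1))
    refine hs_conv h (fun l => ?_) ?_
    · simp only [Function.comp, Equiv.prodComm_apply, Prod.swap]
      field_simp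
      ring
    · field_simp
  have h4 := (mzv2_big 2 1 le_rfl le_rfl).add (tl_hasSum 3 0 (by norm_num))
  have h5 := h3.unique (by
    refine hs_conv h4 (fun M => ?_) rfl
    rw [hH_succ]; simp; field_simp)
  linarith

/-- `f(N) = Σ_n t_{n+N}/n`. -/
lemma f_hasSum (N : ℕ) :
    HasSum (fun l : ℕ => tl 2 (l + 1 + N) * (1 / ((l : ℝ) + 1)))
      (tl 3 0 + ∑ j ∈ Finset.range N, (tl 2 (j + 1) / ((j : ℝ) + 1) - hH 1 (j + 1) / ((j : ℝ) + 1) ^ 2)) := by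
  induction N with
  | zero =>
    have := mzv2_small 1 le_rfl
    rw [euler] at this
    simpa using this
  | succ N ih =>
    rw [Finset.sum_range_succ, ← add_assoc]
    have e1 := (harm_hasSum' N).div_const ((N : ℝ) + 1)
    have e2 := (tl_hasSum 2 (N + 1) le_rfl).div_const ((N : ℝ) + 1)
    refine hs_conv (ih.add (e2.sub e1)) (fun l => ?_) ?_
    · rw [show l + 1 + (N + 1) = (l + 1 + N) + 1 by ring, tl_succ]
      push_cast
      field_simp
      ring
    · field_simp

/-- The `V_N` sum. -/
lemma V_hasSum (M : ℕ) :
    HasSum (fun j : ℕ => if M = j then 0 else tl 2 (j + 1) * (1 / ((j : ℝ) - M)))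
      (tl 2 (M + 1) / ((M : ℝ) + 1) - hH 1 M / ((M : ℝ) + 1) ^ 2 + tl 3 (M + 1) - Qs M) := by
  rw [← hasSum_nat_add_iff' (M + 1)]
  refine hs_conv (f_hasSum (M + 1)) (fun l => ?_) ?_
  · rw [if_neg (by omega), show l + (M + 1) + 1 = l + 1 + (M + 1) by ring]
    push_cast
    congr 2
    ring
  · rw [Finset.sum_range_succ, Finset.sum_range_succ, if_pos rfl]
    have e1 : ∀ j ∈ Finset.range M, (if M = j then 0 else tl 2 (j + 1) * (1 / ((j : ℝ) - M)))
        = - (tl 2 (j + 1) * (1 / ((M : ℝ) - j))) := by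
      intro j hj
      have := Finset.mem_range.1 hj
      rw [if_neg (by omega), show (j : ℝ) - M = -((M : ℝ) - j) by ring, one_div_neg_eq_neg_one_div]
      ring
    rw [Finset.sum_congr rfl e1, Qs_eq]
    have e2 : tl 3 (M + 1) = tl 3 0 - ∑ j ∈ Finset.range M, 1 / ((j : ℝ) + 1) ^ 3
        - 1 / ((M : ℝ) + 1) ^ 3 := by
      rw [tl_succ]; unfold tl; rw [hH_zero, hH]; ring
    have e3 : ∑ j ∈ Finset.range M, 1 / ((M : ℝ) - j) = ∑ j ∈ Finset.range M, 1 / ((j : ℝ) + 1) := by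
      rw [sum_rev M M le_rfl, Nat.sub_self, hH_zero, hH]; simp
    have e4 : ∑ j ∈ Finset.range M, -(tl 2 (j + 1) * (1 / ((M : ℝ) - j)))
        = - (tl 2 0 * ∑ j ∈ Finset.range M, 1 / ((j : ℝ) + 1))
          + ∑ j ∈ Finset.range M, hH 2 (j + 1) / ((M : ℝ) - j) := by
      rw [← e3, Finset.mul_sum, ← Finset.sum_neg_distrib, ← Finset.sum_add_distrib]
      apply Finset.sum_congr rfl
      intro j _
      unfold tl; rw [hH_zero]; ring
    have e5 : ∑ j ∈ Finset.range M, (tl 2 (j + 1) / ((j : ℝ) + 1) - hH 1 (j + 1) / ((j : ℝ) + 1) ^ 2)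
        = (tl 2 0 * ∑ j ∈ Finset.range M, 1 / ((j : ℝ) + 1))
          - ∑ j ∈ Finset.range M, (hH 2 (j + 1) / ((j : ℝ) + 1) + hH 1 j / ((j : ℝ) + 1) ^ 2)
          - ∑ j ∈ Finset.range M, 1 / ((j : ℝ) + 1) ^ 3 := by
      rw [Finset.mul_sum, ← Finset.sum_sub_distrib, ← Finset.sum_sub_distrib]
      apply Finset.sum_congr rfl
      intro j _
      rw [hH_succ 1]
      unfold tl; rw [hH_zero]
      field_simp
      ring
    rw [e2, e4, e5, Finset.sum_sub_distrib, hH_succ 1]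
    field_simp
    ring
/-! ### The triple sum -/

lemma F2_summable (q : ℕ) (hq : 1 ≤ q) : Summable (fun p : ℕ × ℕ × ℕ =>
    F2 q ((p.1 : ℝ) + p.2.1 + p.2.2 + 3) ((p.1 : ℝ) + 1) ((p.2.1 : ℝ) + 1)) := by
  set f := (fun p : ℕ × ℕ × ℕ =>
    F2 q ((p.1 : ℝ) + p.2.1 + p.2.2 + 3) ((p.1 : ℝ) + 1) ((p.2.1 : ℝ) + 1)) with hf
  have npow : ∀ i : ℕ, (1 / ((i : ℝ) + 1)) ^ q ≤ 1 / ((i : ℝ) + 1) := by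
    intro i
    have h0 : (0 : ℝ) ≤ i := Nat.cast_nonneg _
    rw [one_div_pow]
    simpa using inv_pow_le ((i : ℝ) + 1) (by linarith) q 1 hq
  have npow' : ∀ i : ℕ, (1 / ((i : ℝ) + 1)) ^ (q + 1) ≤ 1 / ((i : ℝ) + 1) := by
    intro i
    have h0 : (0 : ℝ) ≤ i := Nat.cast_nonneg _
    rw [one_div_pow]
    simpa using inv_pow_le ((i : ℝ) + 1) (by linarith) (q + 1) 1 (by omega)
  have offb : ∀ i j l d : ℕ, (i = j + d + 1 ∨ j = i + d + 1) →
      ‖f (i, j, l)‖ ≤ 1 / rr (min i j) ^ 5 * (1 / rr d ^ 5 * (1 / rr l ^ 5)) := by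
    intro i j l d h
    refine le_trans ?_ (boundoff i j l d h)
    have hne : ((i : ℝ) + 1) ≠ j + 1 := by
      intro h'
      have : i = j := by exact_mod_cast add_right_cancel h'
      omega
    simp only [hf, F2, if_neg hne]
    rw [norm_mul, norm_mul]
    have a1 : ‖(1 / ((i : ℝ) + 1)) ^ q‖ ≤ 1 / ((i : ℝ) + 1) := by
      rw [Real.norm_of_nonneg (by positivity)]; exact npow i
    have a2 : ‖1 / ((j : ℝ) + 1 - (i + 1))‖ = 1 / ((d : ℝ) + 1) := by
      rw [norm_div, norm_one, Real.norm_eq_abs]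
      congr 1
      rcases h with h | h
      · rw [h]; push_cast
        rw [show (j : ℝ) + 1 - (j + d + 1 + 1) = - ((d : ℝ) + 1) by ring, abs_neg]
        exact abs_of_pos (by positivity)
      · rw [h]; push_cast
        rw [show (i : ℝ) + d + 1 + 1 - (i + 1) = ((d : ℝ) + 1) by ring]
        exact abs_of_pos (by positivity)
    have a3 : ‖1 / ((i : ℝ) + j + l + 3 - (i + 1)) ^ 2‖ = 1 / ((j : ℝ) + l + 2) ^ 2 := by
      rw [show (i : ℝ) + j + l + 3 - (i + 1) = (j : ℝ) + l + 2 by ring]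
      exact Real.norm_of_nonneg (by positivity)
    rw [a2, a3]
    gcongr
  have s1 : Summable (fun p : ℕ × ℕ × ℕ => if p.2.1 < p.1 then f p else 0) := by
    have inj : Function.Injective (fun p : ℕ × ℕ × ℕ => (p.1 + p.2.1 + 1, p.1, p.2.2)) := by
      rintro ⟨a, b, b'⟩ ⟨c, d, d'⟩ h
      simp only [Prod.mk.injEq] at h ⊢
      omega
    rw [← inj.summable_iff]
    · refine Summable.of_norm_bounded rr_summable3 (fun p => ?_)
      simp only [Function.comp]
      rw [if_pos (by omega)]
      have := offb (p.1 + p.2.1 + 1) p.1 p.2.2 p.2.1 (Or.inl rfl)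
      rwa [min_eq_right (by omega)] at this
    · rintro ⟨a, b, c⟩ hx
      simp only
      rw [if_neg]
      intro hlt
      apply hx
      exact ⟨(b, a - b - 1, c), by simp; omega⟩
  have s2 : Summable (fun p : ℕ × ℕ × ℕ => if p.1 < p.2.1 then f p else 0) := by
    have inj : Function.Injective (fun p : ℕ × ℕ × ℕ => (p.1, p.1 + p.2.1 + 1, p.2.2)) := by
      rintro ⟨a, b, b'⟩ ⟨c, d, d'⟩ h
      simp only [Prod.mk.injEq] at h ⊢
      omega
    rw [← inj.summable_iff]
    · refine Summable.of_norm_bounded rr_summable3 (fun p => ?_)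
      simp only [Function.comp]
      rw [if_pos (by omega)]
      have := offb p.1 (p.1 + p.2.1 + 1) p.2.2 p.2.1 (Or.inr rfl)
      rwa [min_eq_left (by omega)] at this
    · rintro ⟨a, b, c⟩ hx
      simp only
      rw [if_neg]
      intro hlt
      apply hx
      exact ⟨(a, b - a - 1, c), by simp; omega⟩
  have s3 : Summable (fun p : ℕ × ℕ × ℕ => if p.1 = p.2.1 then f p else 0) := by
    have inj : Function.Injective (fun p : ℕ × ℕ => (p.1, p.1, p.2)) := by
      rintro ⟨a, b⟩ ⟨c, d⟩ h
      simp only [Prod.mk.injEq] at h ⊢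
      omega
    rw [← inj.summable_iff]
    · refine Summable.of_norm_bounded (rr_summable2.mul_left ((q : ℝ) / 2 + 1)) (fun p => ?_)
      simp only [Function.comp, if_true, hf, F2]
      refine le_trans ?_ (mul_le_mul_of_nonneg_left (bound2 p.1 p.2) (by positivity))
      have h0 : (0 : ℝ) ≤ p.1 := Nat.cast_nonneg _
      have h1 : (0 : ℝ) ≤ p.2 := Nat.cast_nonneg _
      rw [show (p.1 : ℝ) + p.1 + p.2 + 3 - (p.1 + 1) = (p.1 : ℝ) + p.2 + 2 by ring]
      have b1 := npow p.1
      have b2 := npow' p.1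
      have b3 := inv_pow_le ((p.1 : ℝ) + p.2 + 2) (by linarith) 3 2 (by norm_num)
      have b4 : (1 / ((p.1 : ℝ) + 1)) ^ (q + 1) * (1 / ((p.1 : ℝ) + p.2 + 2) ^ 2)
          ≤ 1 / ((p.1 : ℝ) + 1) * (1 / ((p.1 : ℝ) + p.2 + 2) ^ 2) := by gcongr
      have b5 : (1 / ((p.1 : ℝ) + 1)) ^ q * (1 / ((p.1 : ℝ) + p.2 + 2) ^ 3)
          ≤ 1 / ((p.1 : ℝ) + 1) * (1 / ((p.1 : ℝ) + p.2 + 2) ^ 2) := by gcongr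
      have b6 : 0 ≤ (1 / ((p.1 : ℝ) + 1)) ^ (q + 1) * (1 / ((p.1 : ℝ) + p.2 + 2) ^ 2) := by positivity
      have b7 : 0 ≤ (1 / ((p.1 : ℝ) + 1)) ^ q * (1 / ((p.1 : ℝ) + p.2 + 2) ^ 3) := by positivity
      have hq0 : (0 : ℝ) ≤ q := Nat.cast_nonneg _
      have b8 := mul_le_mul_of_nonneg_left b4 hq0
      have b9 := mul_nonneg hq0 b6
      rw [Real.norm_eq_abs, abs_le]
      constructor <;> nlinarith
    · rintro ⟨a, b, c⟩ hx
      simp only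
      rw [if_neg]
      intro hlt
      apply hx
      exact ⟨(a, c), by simp; omega⟩
  refine ((s1.add s2).add s3).congr (fun p => ?_)
  rcases lt_trichotomy p.1 p.2.1 with h | h | h
  · rw [if_neg (by omega), if_pos h, if_neg (by omega)]; ring
  · rw [if_neg (by omega), if_neg (by omega), if_pos h]; ring
  · rw [if_pos h, if_neg (by omega), if_neg (by omega)]; ring

noncomputable def E2 (q i : ℕ) : ℝ :=
  (1 / ((i : ℝ) + 1)) ^ q * (tl 2 (i + 1) / ((i : ℝ) + 1) - hH 1 i / ((i : ℝ) + 1) ^ 2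
      + tl 3 (i + 1) - Qs i)
    + (1 / 2) * (q * (1 / ((i : ℝ) + 1)) ^ (q + 1) * tl 2 (i + 1)
      - 2 * (1 / ((i : ℝ) + 1)) ^ q * tl 3 (i + 1))

lemma F2_hasSum (q : ℕ) (S : ℝ) (h : HasSum (fun p : ℕ × ℕ × ℕ =>
    F2 q ((p.1 : ℝ) + p.2.1 + p.2.2 + 3) ((p.1 : ℝ) + 1) ((p.2.1 : ℝ) + 1)) S) :
    HasSum (fun i => E2 q i) S := by
  refine h.prod_fiberwise (fun i => ?_)
  have hs := h.summable.prod_factor i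
  have h1 := hs.hasSum
  have h2 := h1.prod_fiberwise (g := fun j : ℕ =>
    (1 / ((i : ℝ) + 1)) ^ q * (if i = j then 0 else tl 2 (j + 1) * (1 / ((j : ℝ) - i)))
    + (if j = i then (1 / 2) * (q * (1 / ((i : ℝ) + 1)) ^ (q + 1) * tl 2 (i + 1)
      - 2 * (1 / ((i : ℝ) + 1)) ^ q * tl 3 (i + 1)) else 0)) (by
    intro j
    simp only
    by_cases hij : i = j
    · subst hij
      simp only [if_true, F2, mul_zero, zero_add]
      refine hs_conv ((((tl_hasSum 2 (i + 1) le_rfl).mul_left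
        (q * (1 / ((i : ℝ) + 1)) ^ (q + 1))).sub ((tl_hasSum 3 (i + 1) (by norm_num)).mul_left
        (2 * (1 / ((i : ℝ) + 1)) ^ q))).mul_left (1 / 2)) (fun l => ?_) rfl
      rw [show (i : ℝ) + i + l + 3 - (i + 1) = ((i + 1 : ℕ) : ℝ) + l + 1 by push_cast; ring]
    · have hne : ((i : ℝ) + 1) ≠ j + 1 := by
        intro h'
        exact hij (by exact_mod_cast add_right_cancel h')
      simp only [if_neg hij, if_neg (Ne.symm hij), F2, if_neg hne, add_zero]
      refine hs_conv ((tl_hasSum 2 (j + 1) le_rfl).mul_left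
        ((1 / ((i : ℝ) + 1)) ^ q * (1 / ((j : ℝ) - i)))) (fun l => ?_) (by ring)
      rw [show (i : ℝ) + j + l + 3 - (i + 1) = ((j + 1 : ℕ) : ℝ) + l + 1 by push_cast; ring,
        show (j : ℝ) + 1 - (i + 1) = j - i by ring])
  have h3 := ((V_hasSum i).mul_left ((1 / ((i : ℝ) + 1)) ^ q)).add
    (hasSum_ite_eq i ((1 / 2) * (q * (1 / ((i : ℝ) + 1)) ^ (q + 1) * tl 2 (i + 1)
      - 2 * (1 / ((i : ℝ) + 1)) ^ q * tl 3 (i + 1))))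
  have h4 := h2.unique h3
  rw [h4] at h1
  exact h1

lemma F1_fiber (q M : ℕ) : ∑ i ∈ Finset.range M, ∑ j ∈ Finset.range (M - 1 - i),
    F1 q ((M : ℝ) + 1) ((i : ℝ) + 1) ((j : ℝ) + 1)
    = q * (1 / ((M : ℝ) + 1)) ^ (q + 1) * alpha M + (1 / ((M : ℝ) + 1)) ^ q * (2 * Qs M) := by
  have r : ∀ i ∈ Finset.range M, ∑ j ∈ Finset.range (M - 1 - i), 1 / ((M : ℝ) - j)
      = hH 1 M - hH 1 (i + 1) := by
    intro i hi
    have := Finset.mem_range.1 hi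
    rw [sum_rev M _ (by omega), show M - (M - 1 - i) = i + 1 by omega]
  have ea : alpha M = ∑ i ∈ Finset.range M, ∑ j ∈ Finset.range (M - 1 - i),
      1 / ((M : ℝ) - i) * (1 / ((M : ℝ) - j)) := by
    unfold alpha
    apply Finset.sum_congr rfl
    intro i hi
    rw [← Finset.mul_sum, r i hi]
  have eQ : Qs M = ∑ i ∈ Finset.range M, ∑ j ∈ Finset.range (M - 1 - i),
      1 / ((M : ℝ) - i) ^ 2 * (1 / ((M : ℝ) - j)) := by
    unfold Qs
    apply Finset.sum_congr rfl
    intro i hi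
    rw [← Finset.mul_sum, r i hi]
  have eQ' : Qs M = ∑ i ∈ Finset.range M, ∑ j ∈ Finset.range (M - 1 - i),
      1 / ((M : ℝ) - j) ^ 2 * (1 / ((M : ℝ) - i)) := by
    rw [eQ]
    apply Finset.sum_comm'
    intro x y
    simp only [Finset.mem_range]
    omega
  rw [two_mul]
  nth_rewrite 1 [eQ]
  rw [eQ', ea, ← Finset.sum_add_distrib, Finset.mul_sum, Finset.mul_sum, ← Finset.sum_add_distrib]
  apply Finset.sum_congr rfl
  intro i _
  rw [← Finset.sum_add_distrib, Finset.mul_sum, Finset.mul_sum, ← Finset.sum_add_distrib]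
  apply Finset.sum_congr rfl
  intro j _
  unfold F1
  rw [show (M : ℝ) + 1 - (i + 1) = M - i by ring, show (M : ℝ) + 1 - (j + 1) = M - j by ring]
  simp only [one_div_mul_one_div]

lemma F1_hasSum (q : ℕ) (S : ℝ) (h : HasSum (fun p : ℕ × ℕ × ℕ =>
    F1 q ((p.1 : ℝ) + p.2.1 + p.2.2 + 3) ((p.1 : ℝ) + 1) ((p.2.1 : ℝ) + 1)) S) :
    HasSum (fun M : ℕ => q * (1 / ((M : ℝ) + 1)) ^ (q + 1) * alpha M
      + (1 / ((M : ℝ) + 1)) ^ q * (2 * Qs M)) S := by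
  have := anti3 (fun M i j => F1 q ((M : ℝ) + 1) ((i : ℝ) + 1) ((j : ℝ) + 1)) S (by
    refine hs_conv h (fun p => ?_) rfl
    push_cast
    congr 1
    ring)
  exact hs_conv this (fun M => (F1_fiber q M).symm) rfl

def sw : ℕ × ℕ × ℕ ≃ ℕ × ℕ × ℕ where
  toFun p := (p.2.1, p.1, p.2.2)
  invFun p := (p.2.1, p.1, p.2.2)
  left_inv _ := rfl
  right_inv _ := rfl

lemma hC_sum (q : ℕ) (hq : 1 ≤ q) (T : ℝ) (h : HasSum (fun p : ℕ × ℕ × ℕ =>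
    hC q (1 / ((p.1 : ℝ) + p.2.1 + p.2.2 + 3)) (1 / ((p.1 : ℝ) + 1)) (1 / ((p.2.1 : ℝ) + 1))) T) :
    T = q * mzv ![q + 1, 2] - 2 * ((q : ℝ) + 1) * mzv ![q + 2, 1] + ((q : ℝ) + 2) * mzv ![2, q + 1] := by
  obtain ⟨S, hS⟩ := F2_summable q hq
  have hS' := sw.hasSum_iff.2 hS
  have hF1 := F1_hasSum q _ (hs_conv ((h.sub hS).sub hS') (fun p => by
    have e := hC_split q ((p.1 : ℝ) + p.2.1 + p.2.2 + 3) ((p.1 : ℝ) + 1) ((p.2.1 : ℝ) + 1)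
      (by positivity) (by positivity) (by positivity)
      (by rw [show (p.1 : ℝ) + p.2.1 + p.2.2 + 3 - (p.1 + 1) = p.2.1 + p.2.2 + 2 by ring]; positivity)
      (by rw [show (p.1 : ℝ) + p.2.1 + p.2.2 + 3 - (p.2.1 + 1) = p.1 + p.2.2 + 2 by ring]; positivity)
    simp only [Function.comp, sw, Equiv.coe_fn_mk]
    rw [e, add_comm (p.2.1 : ℝ) p.1]
    ring) rfl)
  have hF2 := F2_hasSum q S hS
  have hT := hF1.add (hF2.mul_left 2)
  have hR := (((mzv2_big (q + 1) 2 (by omega) (by omega)).mul_left (q : ℝ)).sub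
    ((mzv2_big (q + 2) 1 (by omega) (by omega)).mul_left (2 * ((q : ℝ) + 1)))).add
    ((mzv2_small (q + 1) (by omega)).mul_left ((q : ℝ) + 2))
  have := hT.unique (hs_conv hR (fun M => by
    rw [alpha_eq, E2]
    simp only [one_div_pow]
    field_simp
    ring) rfl)
  linarith

lemma hC_L (q : ℕ) : HasSum (fun p : ℕ × ℕ × ℕ =>
    hC q (1 / ((p.1 : ℝ) + p.2.1 + p.2.2 + 3)) (2 * (1 / ((p.1 : ℝ) + p.2.1 + 2)))
      (1 / ((p.1 : ℝ) + 1)))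
    (∑ i ∈ Finset.range q, ∑ j ∈ Finset.range (q - i),
      ((i : ℝ) + 1) * 2 ^ (j + 1) * mzv ![i + 2, j + 1, q - i - j]) := by
  unfold hC hA
  apply hasSum_sum
  intro i hi
  simp only [Finset.mul_sum]
  apply hasSum_sum
  intro j hj
  have := Finset.mem_range.1 hj
  refine hs_conv ((mzv3 (i + 2) (j + 1) (q - i - j) (by omega) (by omega) (by omega)).mul_left
    (((i : ℝ) + 1) * 2 ^ (j + 1))) (fun p => ?_) rfl
  simp only [mul_pow, one_div_pow]
  ring

lemma L_eq (q : ℕ) (hq : 1 ≤ q) : (∑ i ∈ Finset.range q, ∑ j ∈ Finset.range (q - i),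
      ((i : ℝ) + 1) * 2 ^ (j + 1) * mzv ![i + 2, j + 1, q - i - j])
    = q * mzv ![q + 1, 2] - 2 * ((q : ℝ) + 1) * mzv ![q + 2, 1]
      + ((q : ℝ) + 2) * mzv ![2, q + 1] := by
  apply hC_sum q hq
  have h := hC_L q
  have h' := sw.hasSum_iff.2 h
  refine hs_conv ((h.add h').mul_left (1 / 2)) (fun p => ?_) (by ring)
  simp only [Function.comp, sw, Equiv.coe_fn_mk]
  rw [add_comm (p.2.1 : ℝ) p.1, hC_two q _ (1 / ((p.1 : ℝ) + p.2.1 + 2)) (1 / ((p.1 : ℝ) + 1))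
    (1 / ((p.2.1 : ℝ) + 1)) (by field_simp; ring) (by positivity)]
  ring

theorem weighted_sum_depth3_a_2b (w : ℕ) (hw : 4 ≤ w)
    (v u q : ℕ) (hv : v = w - 1) (hu : u = w - 2) (hq : q = w - 3) :
    (∑ a ∈ Finset.Icc 2 (w - 2), ∑ b ∈ Finset.Icc 1 (w - a - 1),
        ((a : ℝ) - 1) * (2 : ℝ) ^ b * mzv ![a, b, w - a - b])
    = (q : ℝ) * mzv ![u, 2] - 2 * (u : ℝ) * mzv ![v, 1] + (v : ℝ) * mzv ![2, u] := by
  obtain rfl : w = q + 3 := by omega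
  obtain rfl : u = q + 1 := by omega
  obtain rfl : v = q + 2 := by omega
  have h := L_eq q (by omega)
  push_cast
  rw [← h]
  have e1 : Finset.Icc 2 (q + 1) = Finset.Ico 2 (q + 2) := by
    ext x; simp only [Finset.mem_Icc, Finset.mem_Ico]; omega
  rw [e1, Finset.sum_Ico_eq_sum_range]
  apply Finset.sum_congr rfl
  intro i hi
  have hi' := Finset.mem_range.1 hi
  have e2 : Finset.Icc 1 (q + 3 - (2 + i) - 1) = Finset.Ico 1 (q - i + 1) := by
    ext x; simp only [Finset.mem_Icc, Finset.mem_Ico]; omega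
  rw [e2, Finset.sum_Ico_eq_sum_range]
  apply Finset.sum_congr rfl
  intro j hj
  have hj' := Finset.mem_range.1 hj
  rw [show q + 3 - (2 + i) - (1 + j) = q - i - j by omega, add_comm 2 i, add_comm 1 j]
  push_cast
  ring
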